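/- Let q be a real number with 0 < q < 1. Then Ω₁² + Ω₂² = ψ(q²)⁴/ψ(−q⁵)⁴ + q⁴·ψ(q^{10})⁴/ψ(−q⁵)⁴ − 2q²·ψ(q²)²·ψ(q^{10})²/ψ(−q⁵)⁴ + 2q·φ(−q^{10})·ψ(−q)/(φ(−q)·ψ(q⁵)). -/

import Mathlib

/-- Ramanujan's theta function `f(a,b) = ∑_{n ∈ ℤ} a^(n(n+1)/2) b^(n(n-1)/2)`. -/
noncomputable def ramTheta (a b : ℂ) : ℂ :=
  ∑' n : ℤ, a ^ ((n * (n + 1)) / 2).toNat * b ^ ((n * (n - 1)) / 2).toNat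

/-- `φ(q) = f(q,q)`. -/
noncomputable def phi (q : ℂ) : ℂ := ramTheta q q

/-- `ψ(q) = f(q,q³)`. -/
noncomputable def psi (q : ℂ) : ℂ := ramTheta q (q ^ 3)

/-- `(a;q)_∞ = ∏_{k=0}^∞ (1 - a q^k)`. -/
noncomputable def qPochInf (a q : ℂ) : ℂ := ∏' k : ℕ, (1 - a * q ^ k)

noncomputable def Omega1 (q : ℝ) : ℂ :=
  ramTheta ((q : ℂ) ^ 4) ((q : ℂ) ^ 6) / ramTheta (-(q : ℂ)) (-(q : ℂ) ^ 9)

noncomputable def Omega2 (q : ℝ) : ℂ :=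
  (q : ℂ) * ramTheta ((q : ℂ) ^ 2) ((q : ℂ) ^ 8) / ramTheta (-(q : ℂ) ^ 3) (-(q : ℂ) ^ 7)

/-! Since `Ω₁² + Ω₂² = (Ω₁ - Ω₂)² + 2 Ω₁ Ω₂`, it suffices to evaluate the difference and the
product. The product is a quotient of infinite products, by the Jacobi triple product. For the
difference, Schröter's formula turns the numerator over a common denominator into
`f(-q,q⁴) f(q²,-q³)`, and the identity `f(a,ab²) f(b,a²b) = f(a,b) ψ(ab)` then gives
`Ω₁ - Ω₂ = f(q²,q⁸) f(q⁴,q⁶) / ψ(-q⁵)²`. Schröter's formula for `f(1,q²)²`, with five translates,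
identifies this numerator as `ψ(q²)² - q² ψ(q¹⁰)²`. The triple product itself follows from a
two-parameter truncation of the theta series that factors into finite products. -/

open Filter Finset Topology

section ThetaTerm

/-- The triangular number `n(n+1)/2` of an integer; the other exponent `n(n-1)/2` of the theta
series is `triangular (-n)`. -/
def triangular (n : ℤ) : ℤ := n * (n + 1) / 2

lemma two_mul_triangular (n : ℤ) : 2 * triangular n = n * (n + 1) :=
  Int.mul_ediv_cancel' (Int.even_mul_succ_self n).two_dvd

lemma triangular_nonneg (n : ℤ) : 0 ≤ triangular n := by
  have h := two_mul_triangular n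
  rcases le_or_gt 0 n with hn | hn <;> nlinarith

lemma triangular_add_triangular_neg (n : ℤ) : triangular n + triangular (-n) = n ^ 2 := by
  linarith [two_mul_triangular n, two_mul_triangular (-n)]

lemma triangular_sub_triangular_neg (n : ℤ) : triangular n - triangular (-n) = n := by
  linarith [two_mul_triangular n, two_mul_triangular (-n)]

lemma triangular_add (m n : ℤ) : triangular (m + n) = triangular m + triangular n + m * n := by
  linarith [two_mul_triangular m, two_mul_triangular n, two_mul_triangular (m + n)]

lemma triangular_mul (m n : ℤ) :
    triangular (m * n) =
      triangular m * triangular n + triangular (-m) * triangular (-n) := by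
  have expand : 4 * (triangular m * triangular n + triangular (-m) * triangular (-n)) =
      m * (m + 1) * (n * (n + 1)) + -m * (-m + 1) * (-n * (-n + 1)) := by
    simp only [← two_mul_triangular]
    ring
  linarith [two_mul_triangular (m * n)]

/-- The `n`-th term of the series `f(a,b)`, with integer exponents so that its algebra does not
involve truncation. -/
noncomputable def thetaTerm (a b : ℂ) (n : ℤ) : ℂ := a ^ triangular n * b ^ triangular (-n)

lemma ramTheta_eq_tsum_thetaTerm (a b : ℂ) : ramTheta a b = ∑' n, thetaTerm a b n := by
  refine tsum_congr fun n => ?_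
  have reflect : n * (n - 1) / 2 = triangular (-n) := by rw [triangular]; congr 1; ring
  rw [thetaTerm, reflect, ← zpow_natCast, ← zpow_natCast,
    Int.toNat_of_nonneg (triangular_nonneg _), ← triangular,
    Int.toNat_of_nonneg (triangular_nonneg _)]

lemma thetaTerm_one (a b : ℂ) : thetaTerm a b 1 = a := by simp [thetaTerm, triangular]

lemma thetaTerm_neg (a b : ℂ) (n : ℤ) : thetaTerm a b (-n) = thetaTerm b a n := by
  rw [thetaTerm, thetaTerm, neg_neg, mul_comm]

lemma ramTheta_comm (a b : ℂ) : ramTheta a b = ramTheta b a := by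
  simp only [ramTheta_eq_tsum_thetaTerm, ← thetaTerm_neg a b]
  exact ((Equiv.neg ℤ).tsum_eq _).symm

lemma ramTheta_zero_zero : ramTheta 0 0 = 1 := by
  rw [ramTheta_eq_tsum_thetaTerm, tsum_eq_single 0]
  · simp [thetaTerm, triangular]
  · intro n hn
    have hsum : triangular n + triangular (-n) ≠ 0 :=
      triangular_add_triangular_neg n ▸ pow_ne_zero 2 hn
    by_cases htri : triangular n = 0
    · rw [htri, zero_add] at hsum
      rw [thetaTerm, zero_zpow _ hsum, mul_zero]
    · rw [thetaTerm, zero_zpow _ htri, zero_mul]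

lemma thetaTerm_mul_thetaTerm (a b c d : ℂ) (n : ℤ) :
    thetaTerm a b n * thetaTerm c d n = thetaTerm (a * c) (b * d) n := by
  simp only [thetaTerm, mul_zpow]
  ring

lemma thetaTerm_mul_div {t : ℂ} (ht : t ≠ 0) (a b : ℂ) (n : ℤ) :
    thetaTerm (a * t) (b / t) n = t ^ n * thetaTerm a b n := by
  have twist : t ^ n = t ^ triangular n / t ^ triangular (-n) := by
    rw [← zpow_sub₀ ht, triangular_sub_triangular_neg]
  rw [twist, thetaTerm, thetaTerm, mul_zpow, div_zpow]
  ring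

variable {a b : ℂ} (ha : a ≠ 0) (hb : b ≠ 0)
include ha hb

lemma thetaTerm_ne_zero (n : ℤ) : thetaTerm a b n ≠ 0 :=
  mul_ne_zero (zpow_ne_zero _ ha) (zpow_ne_zero _ hb)

lemma thetaTerm_add (m n : ℤ) :
    thetaTerm a b (m + n) = thetaTerm a b m * thetaTerm a b n * (a * b) ^ (m * n) := by
  simp only [thetaTerm, neg_add, triangular_add, zpow_add₀ ha, zpow_add₀ hb, mul_zpow, neg_mul_neg]
  ring

lemma mul_zpow_mul_thetaTerm_sub_one (n : ℤ) :
    a * (a * b) ^ (n - 1) * thetaTerm a b (n - 1) = thetaTerm a b n := by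
  have h := thetaTerm_add ha hb 1 (n - 1)
  rw [add_sub_cancel, one_mul, thetaTerm_one] at h
  rw [h, mul_right_comm]

lemma ramTheta_eq_mul_ramTheta_inv : ramTheta a b = a * ramTheta (a ^ 2 * b) a⁻¹ := by
  have shift (n : ℤ) : thetaTerm a b (n + 1) = a * thetaTerm (a ^ 2 * b) a⁻¹ n := by
    have hinv : a⁻¹ = b / (a * b) := by field_simp
    rw [← mul_zpow_mul_thetaTerm_sub_one ha hb, add_sub_cancel_right, mul_assoc,
      ← thetaTerm_mul_div (mul_ne_zero ha hb), hinv, sq, mul_assoc a a b]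
  rw [ramTheta_eq_tsum_thetaTerm, ramTheta_eq_tsum_thetaTerm, ← tsum_mul_left,
    ← (Equiv.addRight (1 : ℤ)).tsum_eq]
  exact tsum_congr shift

lemma thetaTerm_mul (m n : ℤ) :
    thetaTerm a b (m * n) = thetaTerm (thetaTerm a b m) (thetaTerm a b (-m)) n := by
  simp only [thetaTerm, ← neg_mul, triangular_mul, neg_neg, zpow_add₀ ha, zpow_add₀ hb, mul_zpow,
    zpow_mul]
  ring

lemma thetaTerm_mul_thetaTerm_neg (n : ℤ) :
    thetaTerm a b n * thetaTerm a b (-n) = (a * b) ^ n ^ 2 := by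
  rw [← triangular_add_triangular_neg, mul_zpow, zpow_add₀ ha, zpow_add₀ hb, thetaTerm, thetaTerm,
    neg_neg]
  ring

lemma thetaTerm_eq_jacobiTheta₂_term (n : ℤ) :
    thetaTerm a b n = jacobiTheta₂_term n
      ((Complex.log a - Complex.log b) / (4 * Real.pi * Complex.I))
      ((Complex.log a + Complex.log b) / (2 * Real.pi * Complex.I)) := by
  have exponent (m : ℤ) : 2 * (triangular m : ℂ) = m * (m + 1) := by
    exact_mod_cast two_mul_triangular m
  have hn := exponent n
  have hneg := exponent (-n)
  push_cast at hneg
  rw [thetaTerm, ← Complex.exp_log ha, ← Complex.exp_log hb, ← Complex.exp_int_mul,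
    ← Complex.exp_int_mul, ← Complex.exp_add, jacobiTheta₂_term, Complex.exp_log ha,
    Complex.exp_log hb]
  congr 1
  field_simp
  linear_combination 4 * Complex.log a * hn + 4 * Complex.log b * hneg

lemma summable_thetaTerm (hab : ‖a * b‖ < 1) : Summable (thetaTerm a b) := by
  have hlog : Real.log ‖a‖ + Real.log ‖b‖ < 0 := by
    rw [← Real.log_mul (norm_ne_zero_iff.mpr ha) (norm_ne_zero_iff.mpr hb), ← norm_mul]
    exact Real.log_neg (norm_pos_iff.mpr (mul_ne_zero ha hb)) hab
  have im_div (w : ℂ) : (w / (2 * Real.pi * Complex.I)).im = -w.re / (2 * Real.pi) := by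
    rw [← div_div, Complex.div_I, ← Complex.ofReal_ofNat, ← Complex.ofReal_mul]
    simp [-Complex.ofReal_mul, neg_div]
  rw [funext (thetaTerm_eq_jacobiTheta₂_term ha hb), summable_jacobiTheta₂_term_iff, im_div,
    Complex.add_re, Complex.log_re, Complex.log_re]
  exact div_pos (neg_pos.mpr hlog) Real.two_pi_pos

end ThetaTerm

section Schroeter

/-- The lattice `ℤ²` as a union of `k² + 1` translates of the sublattice spanned by `(1, k)` and
`(-k, 1)`; the translate containing `(m, n)` is given by `m + k * n` modulo `k² + 1`. -/
def rotatedSublatticeEquiv (k : ℕ) : Fin (k ^ 2 + 1) × ℤ × ℤ ≃ ℤ × ℤ where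
  toFun x := (x.2.1 - k * x.2.2 + (x.1 : ℕ), k * x.2.1 + x.2.2)
  invFun y :=
    let d := Int.divModEquiv (k ^ 2 + 1) (y.1 + k * y.2)
    (d.2, d.1, y.2 - k * d.1)
  left_inv := by
    rintro ⟨r, i, j⟩
    have hdiv : Int.divModEquiv (k ^ 2 + 1) (i - k * j + (r : ℕ) + k * (k * i + j)) = (i, r) := by
      rw [← Equiv.eq_symm_apply, Int.divModEquiv_symm_apply]
      push_cast
      ring
    simp [hdiv]
  right_inv := by
    rintro ⟨m, n⟩
    have hdiv := (Int.divModEquiv (k ^ 2 + 1)).symm_apply_apply (m + k * n)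
    rw [Int.divModEquiv_symm_apply] at hdiv
    push_cast at hdiv
    ext
    · linear_combination hdiv
    · ring

lemma tsum_eq_sum_tsum_rotatedSublattice {E : Type*} [NormedAddCommGroup E] [CompleteSpace E]
    {F : ℤ × ℤ → E} (hF : Summable F) (k : ℕ) :
    ∑' y, F y =
      ∑ r ∈ range (k ^ 2 + 1), ∑' y : ℤ × ℤ, F (y.1 - k * y.2 + (r : ℤ), k * y.1 + y.2) := by
  have hF' : Summable fun x => F (rotatedSublatticeEquiv k x) :=
    (rotatedSublatticeEquiv k).summable_iff.mpr hF
  rw [← (rotatedSublatticeEquiv k).tsum_eq, hF'.tsum_prod, tsum_fintype, Finset.sum_range]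
  rfl

variable {a b c d : ℂ} (ha : a ≠ 0) (hb : b ≠ 0) (hc : c ≠ 0) (hd : d ≠ 0)
include ha hb hc hd

lemma thetaTerm_rotate (h : a * b = c * d) (k i j : ℤ) :
    thetaTerm a b (i - k * j) * thetaTerm c d (k * i + j) =
      thetaTerm (a * thetaTerm c d k) (b * thetaTerm c d (-k)) i *
        thetaTerm (c * thetaTerm a b (-k)) (d * thetaTerm a b k) j := by
  have cancel : (a * b) ^ (i * (-k * j)) * (c * d) ^ (k * i * j) = 1 := by
    rw [h, ← zpow_add₀ (mul_ne_zero hc hd), ← zpow_zero (c * d)]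
    congr 1
    ring
  rw [sub_eq_add_neg, ← neg_mul, thetaTerm_add ha hb, thetaTerm_add hc hd,
    thetaTerm_mul ha hb, thetaTerm_mul hc hd, neg_neg, ← thetaTerm_mul_thetaTerm,
    ← thetaTerm_mul_thetaTerm]
  linear_combination (thetaTerm a b i * thetaTerm (thetaTerm a b (-k)) (thetaTerm a b k) j *
    (thetaTerm (thetaTerm c d k) (thetaTerm c d (-k)) i * thetaTerm c d j)) * cancel

lemma thetaTerm_rotate_add (h : a * b = c * d) (k r i j : ℤ) :
    thetaTerm a b (i - k * j + r) * thetaTerm c d (k * i + j) =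
      thetaTerm a b r *
        (thetaTerm (a * thetaTerm c d k * (a * b) ^ r) (b * thetaTerm c d (-k) / (a * b) ^ r) i *
          thetaTerm (c * thetaTerm a b (-k) / (a * b) ^ (k * r))
            (d * thetaTerm a b k * (a * b) ^ (k * r)) j) := by
  have hp (s : ℤ) : (a * b) ^ s ≠ 0 := zpow_ne_zero s (mul_ne_zero ha hb)
  have inv (s : ℤ) : (a * b) ^ s = ((a * b) ^ (-s))⁻¹ := by rw [zpow_neg, inv_inv]
  have split : (a * b) ^ ((i - k * j) * r) = ((a * b) ^ r) ^ i * ((a * b) ^ (-(k * r))) ^ j := by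
    rw [← zpow_mul, ← zpow_mul, ← zpow_add₀ (mul_ne_zero ha hb)]
    congr 1
    ring
  rw [thetaTerm_mul_div (hp r), inv (k * r), div_inv_eq_mul, ← div_eq_mul_inv,
    thetaTerm_mul_div (hp _), thetaTerm_add ha hb, split]
  linear_combination (thetaTerm a b r * ((a * b) ^ r) ^ i * ((a * b) ^ (-(k * r))) ^ j) *
    thetaTerm_rotate ha hb hc hd h k i j

lemma summable_thetaTerm_mul_thetaTerm (hab : ‖a * b‖ < 1) (h : a * b = c * d) (k : ℤ) {t : ℂ}
    (ht : t ≠ 0) :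
    Summable (thetaTerm (a * thetaTerm c d k * t) (b * thetaTerm c d (-k) / t)) := by
  have product : a * thetaTerm c d k * t * (b * thetaTerm c d (-k) / t) =
      a * b * (a * b) ^ k ^ 2 := by
    rw [h, ← thetaTerm_mul_thetaTerm_neg hc hd, ← h]
    field_simp
  apply summable_thetaTerm
  · exact mul_ne_zero (mul_ne_zero ha (thetaTerm_ne_zero hc hd k)) ht
  · exact div_ne_zero (mul_ne_zero hb (thetaTerm_ne_zero hc hd (-k))) ht
  · rw [product, norm_mul, norm_zpow]
    refine mul_lt_one_of_nonneg_of_lt_one_left (norm_nonneg _) hab ?_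
    exact zpow_le_one₀ (norm_pos_iff.mpr (mul_ne_zero ha hb)) hab.le (sq_nonneg k)

/- Summing over the translates of the sublattice of index `k² + 1` diagonalises the quadratic form
in the exponents, so each translate contributes a product of two theta functions. -/
theorem ramTheta_mul_ramTheta_eq_sum (hab : ‖a * b‖ < 1) (h : a * b = c * d) (k : ℕ) :
    ramTheta a b * ramTheta c d = ∑ r ∈ range (k ^ 2 + 1), thetaTerm a b r *
      (ramTheta (a * thetaTerm c d k * (a * b) ^ r) (b * thetaTerm c d (-k) / (a * b) ^ r) *
        ramTheta (c * thetaTerm a b (-k) / (a * b) ^ (k * r))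
          (d * thetaTerm a b k * (a * b) ^ (k * r))) := by
  have hp (n : ℕ) : (a * b) ^ n ≠ 0 := pow_ne_zero n (mul_ne_zero ha hb)
  have hsum := (summable_thetaTerm ha hb hab).norm
  have hsum' := (summable_thetaTerm hc hd (h ▸ hab)).norm
  simp only [ramTheta_eq_tsum_thetaTerm]
  rw [tsum_mul_tsum_of_summable_norm hsum hsum',
    tsum_eq_sum_tsum_rotatedSublattice (E := ℂ) (summable_mul_of_summable_norm hsum hsum') k]
  refine Finset.sum_congr rfl fun r _ => ?_
  have hleft := summable_thetaTerm_mul_thetaTerm ha hb hc hd hab h k (hp r)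
  have hright := summable_thetaTerm_mul_thetaTerm hc hd ha hb (h ▸ hab) h.symm (-k)
    (inv_ne_zero (hp (k * r)))
  rw [← div_eq_mul_inv, div_inv_eq_mul, neg_neg] at hright
  rw [tsum_mul_tsum_of_summable_norm hleft.norm hright.norm, ← tsum_mul_left]
  refine tsum_congr fun y => ?_
  exact_mod_cast thetaTerm_rotate_add ha hb hc hd h k r y.1 y.2

end Schroeter

section QPochhammer

lemma norm_pow_lt_one {R : Type*} [SeminormedRing R] {z : R} (hz : ‖z‖ < 1) {n : ℕ}
    (hn : n ≠ 0) : ‖z ^ n‖ < 1 :=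
  (norm_pow_le' z (Nat.pos_of_ne_zero hn)).trans_lt (pow_lt_one₀ (norm_nonneg z) hz hn)

variable {a p : ℂ} (hp : ‖p‖ < 1)
include hp

lemma summable_qPochInf_factor (a : ℂ) : Summable fun k : ℕ => ‖-(a * p ^ k)‖ := by
  simpa only [norm_neg, norm_mul, norm_pow] using
    (summable_geometric_of_lt_one (norm_nonneg p) hp).mul_left ‖a‖

lemma multipliable_qPochInf (a : ℂ) : Multipliable fun k : ℕ => 1 - a * p ^ k := by
  simpa only [sub_eq_add_neg] using
    multipliable_one_add_of_summable (summable_qPochInf_factor hp a)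

lemma tendsto_prod_qPochInf (a : ℂ) :
    Tendsto (fun n => ∏ k ∈ range n, (1 - a * p ^ k)) atTop (𝓝 (qPochInf a p)) :=
  (multipliable_qPochInf hp a).tendsto_prod_tprod_nat

lemma qPochInf_ne_zero (ha : ‖a‖ < 1) : qPochInf a p ≠ 0 := by
  have factor_ne_zero (k : ℕ) : 1 + -(a * p ^ k) ≠ 0 := by
    rw [← sub_eq_add_neg, sub_ne_zero]
    intro h
    have hlt : ‖a * p ^ k‖ < 1 := by
      rw [norm_mul, norm_pow]
      exact mul_lt_one_of_nonneg_of_lt_one_left (norm_nonneg a) ha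
        (pow_le_one₀ (norm_nonneg p) hp.le)
    rw [← h, norm_one] at hlt
    exact hlt.false
  simpa only [qPochInf, sub_eq_add_neg] using
    tprod_one_add_ne_zero_of_summable factor_ne_zero (summable_qPochInf_factor hp a)

lemma qPochInf_eq_one_sub_mul (a : ℂ) : qPochInf a p = (1 - a) * qPochInf (a * p) p := by
  have tail (k : ℕ) : 1 - a * p ^ (k + 1) = 1 - a * p * p ^ k := by ring
  have hmul := multipliable_qPochInf hp (a * p)
  rw [qPochInf, tprod_eq_zero_mul' (by simpa only [tail] using hmul)]
  simp only [tail, pow_zero, mul_one, qPochInf]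

lemma qPochInf_eq_prod_mul (a : ℂ) (n : ℕ) :
    qPochInf a p = (∏ k ∈ range n, (1 - a * p ^ k)) * qPochInf (a * p ^ n) p := by
  induction n with
  | zero => simp
  | succ n ih =>
    rw [ih, prod_range_succ, qPochInf_eq_one_sub_mul hp (a * p ^ n), pow_succ]
    ring_nf

lemma tendsto_qPochInf_mul_pow (ha : ‖a‖ < 1) :
    Tendsto (fun n : ℕ => qPochInf (a * p ^ n) p) atTop (𝓝 1) := by
  have ha0 := qPochInf_ne_zero hp ha
  have hquot := (tendsto_const_nhds (x := qPochInf a p)).div (tendsto_prod_qPochInf hp a) ha0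
  rw [div_self ha0] at hquot
  refine hquot.congr fun n => ?_
  have hprod := qPochInf_eq_prod_mul hp a n
  exact (div_eq_iff (left_ne_zero_of_mul (hprod ▸ ha0))).mpr (hprod.trans (mul_comm _ _))

lemma qPochInf_mul_neg (a : ℂ) : qPochInf a p * qPochInf (-a) p = qPochInf (a ^ 2) (p ^ 2) := by
  rw [qPochInf, qPochInf,
    ← (multipliable_qPochInf hp a).tprod_mul (multipliable_qPochInf hp (-a)), qPochInf]
  exact tprod_congr fun k => by ring

lemma qPochInf_eq_prod_range (a : ℂ) {N : ℕ} (hN : N ≠ 0) :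
    qPochInf a p = ∏ j ∈ range N, qPochInf (a * p ^ j) (p ^ N) := by
  have hpN : ‖p ^ N‖ < 1 := norm_pow_lt_one hp hN
  have partial_prod (n : ℕ) : ∏ k ∈ range (N * n), (1 - a * p ^ k) =
      ∏ j ∈ range N, ∏ k ∈ range n, (1 - a * p ^ j * (p ^ N) ^ k) := by
    induction n with
    | zero => simp
    | succ n ih =>
      simp only [mul_add_one, prod_range_add, ih, prod_range_succ _ n, prod_mul_distrib]
      congr 1
      exact prod_congr rfl fun j _ => by ring
  refine tendsto_nhds_unique
    ((tendsto_prod_qPochInf hp a).comp (tendsto_id.const_mul_atTop' (Nat.pos_of_ne_zero hN))) ?_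
  simp only [Function.comp_def, id_eq, partial_prod]
  exact tendsto_finsetProd _ fun j _ => tendsto_prod_qPochInf hpN (a * p ^ j)

end QPochhammer

section JacobiTripleProduct

/-- The tail `(p^(m+1);p)_∞` for integer `m`. It equals `(p;p)_∞ / (p;p)_m`, with the convention
that `1 / (p;p)_m = 0` for negative `m`. -/
noncomputable def qPochTail (p : ℂ) (m : ℤ) : ℂ := qPochInf (p ^ (m + 1)) p

section

variable {p : ℂ} (hp0 : p ≠ 0) (hp : ‖p‖ < 1)
include hp0

lemma qPochTail_of_neg {m : ℤ} (hm : m < 0) : qPochTail p m = 0 := by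
  obtain ⟨k, hk⟩ := Int.eq_ofNat_of_zero_le (a := -(m + 1)) (by lia)
  refine tprod_of_exists_eq_zero ⟨k, ?_⟩
  rw [← zpow_natCast, ← zpow_add₀ hp0, ← hk, add_neg_cancel, zpow_zero, sub_self]

include hp

lemma qPochTail_pred (m : ℤ) : qPochTail p (m - 1) = (1 - p ^ m) * qPochTail p m := by
  rw [qPochTail, sub_add_cancel, qPochInf_eq_one_sub_mul hp, ← zpow_add_one₀ hp0, qPochTail]

omit hp0 in
lemma tendsto_qPochTail : Tendsto (qPochTail p) atTop (𝓝 1) := by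
  rw [← Nat.map_cast_int_atTop, tendsto_map'_iff]
  refine (tendsto_qPochInf_mul_pow hp hp).congr fun n => ?_
  rw [Function.comp_apply, qPochTail, ← pow_succ']
  norm_cast

lemma exists_norm_qPochTail_le : ∃ C, ∀ m, ‖qPochTail p m‖ ≤ C := by
  have hlim : Tendsto (fun n : ℕ => ‖qPochTail p n‖) atTop (𝓝 ‖(1 : ℂ)‖) :=
    ((tendsto_qPochTail hp).comp tendsto_natCast_atTop_atTop).norm
  obtain ⟨C, hC⟩ := hlim.bddAbove_range
  refine ⟨C, fun m => ?_⟩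
  rcases lt_or_ge m 0 with hm | hm
  · rw [qPochTail_of_neg hp0 hm, norm_zero]
    exact (norm_nonneg _).trans (hC ⟨0, rfl⟩)
  · obtain ⟨n, rfl⟩ := Int.eq_ofNat_of_zero_le hm
    exact hC ⟨n, rfl⟩

end

/-- The theta series truncated to `-n ≤ j ≤ m`, with the weights under which it factors:
up to normalisation, `qPochTail p (m - j) * qPochTail p (n + j)` with `p = a * b` is the Gaussian
binomial coefficient of `m - j` in `m + n`. -/
noncomputable def truncatedTheta (a b : ℂ) (m n : ℕ) : ℂ :=
  ∑' j : ℤ, qPochTail (a * b) (m - j) * qPochTail (a * b) (n + j) * thetaTerm a b j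

variable {a b : ℂ} (ha : a ≠ 0) (hb : b ≠ 0) (hab : ‖a * b‖ < 1)

lemma truncatedTheta_comm (a b : ℂ) (m n : ℕ) :
    truncatedTheta a b m n = truncatedTheta b a n m := by
  rw [truncatedTheta, ← (Equiv.neg ℤ).tsum_eq]
  refine tsum_congr fun j => ?_
  rw [Equiv.neg_apply, thetaTerm_neg, sub_neg_eq_add, ← sub_eq_add_neg, mul_comm b a,
    mul_comm (qPochTail (a * b) (m + j))]

include ha hb

lemma truncatedTheta_zero_zero : truncatedTheta a b 0 0 = qPochInf (a * b) (a * b) ^ 2 := by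
  have hp := mul_ne_zero ha hb
  rw [truncatedTheta, tsum_eq_single 0]
  · simp [qPochTail, thetaTerm, triangular, sq]
  · intro j hj
    rcases lt_or_gt_of_ne hj with hj | hj
    · simp [qPochTail_of_neg hp hj]
    · simp [qPochTail_of_neg hp (neg_neg_of_pos hj)]

include hab

lemma hasSum_truncatedTheta (m n : ℕ) :
    HasSum (fun j : ℤ => qPochTail (a * b) (m - j) * qPochTail (a * b) (n + j) * thetaTerm a b j)
      (truncatedTheta a b m n) := by
  obtain ⟨C, hC⟩ := exists_norm_qPochTail_le (mul_ne_zero ha hb) hab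
  have hC0 : 0 ≤ C := (norm_nonneg _).trans (hC 0)
  refine (Summable.of_norm_bounded ((summable_thetaTerm ha hb hab).norm.mul_left (C * C))
    fun j => ?_).hasSum
  rw [norm_mul, norm_mul]
  gcongr <;> apply hC

lemma truncatedTheta_term_succ_left (m n : ℕ) (j : ℤ) :
    (1 - (a * b) ^ (m + n + 1)) *
        (qPochTail (a * b) ((m + 1 : ℕ) - j) * qPochTail (a * b) (n + j) * thetaTerm a b j) =
      qPochTail (a * b) (m - j) * qPochTail (a * b) (n + j) * thetaTerm a b j +
        a * (a * b) ^ m * (qPochTail (a * b) (m - (j - 1)) * qPochTail (a * b) (n + (j - 1)) *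
          thetaTerm a b (j - 1)) := by
  have hp := mul_ne_zero ha hb
  have hleft := qPochTail_pred hp hab (m + 1 - j)
  have hright := qPochTail_pred hp hab (n + j)
  have hterm : a * (a * b) ^ m * thetaTerm a b (j - 1) =
      (a * b) ^ (m + 1 - j) * thetaTerm a b j := by
    have split : (a * b) ^ m = (a * b) ^ (m + 1 - j) * (a * b) ^ (j - 1) := by
      rw [← zpow_add₀ hp, ← zpow_natCast]
      congr 1
      ring
    linear_combination a * thetaTerm a b (j - 1) * split +
      (a * b) ^ (m + 1 - j) * mul_zpow_mul_thetaTerm_sub_one ha hb j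
  have hpow : (a * b) ^ (m + n + 1) = (a * b) ^ (m + 1 - j) * (a * b) ^ (n + j) := by
    rw [← zpow_add₀ hp, ← zpow_natCast]
    congr 1
    push_cast
    ring
  rw [show (m : ℤ) - (j - 1) = m + 1 - j by ring, show (m : ℤ) - j = m + 1 - j - 1 by ring,
    ← add_sub_assoc, hleft, hright, hpow]
  push_cast
  linear_combination (-(1 - (a * b) ^ (n + j)) * qPochTail (a * b) (m + 1 - j) *
    qPochTail (a * b) (n + j)) * hterm

lemma truncatedTheta_succ_left (m n : ℕ) :
    (1 - (a * b) ^ (m + n + 1)) * truncatedTheta a b (m + 1) n =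
      (1 + a * (a * b) ^ m) * truncatedTheta a b m n := by
  have hshift := (Equiv.subRight (1 : ℤ)).hasSum_iff.mpr (hasSum_truncatedTheta ha hb hab m n)
  have hsum := (hasSum_truncatedTheta ha hb hab m n).add (hshift.mul_left (a * (a * b) ^ m))
  simp only [Function.comp_apply, Equiv.subRight_apply,
    ← truncatedTheta_term_succ_left ha hb hab] at hsum
  rw [one_add_mul]
  exact ((hasSum_truncatedTheta ha hb hab (m + 1) n).mul_left _).unique hsum

lemma qPochTail_mul_truncatedTheta (m n : ℕ) :
    qPochTail (a * b) n * truncatedTheta a b m n =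
      qPochTail (a * b) (m + n) * truncatedTheta a b 0 n *
        ∏ k ∈ range m, (1 + a * (a * b) ^ k) := by
  induction m with
  | zero => simp
  | succ m ih =>
    have hne : 1 - (a * b) ^ (m + n + 1) ≠ 0 := by
      refine sub_ne_zero.mpr fun h => ?_
      have hlt := norm_pow_lt_one hab (m + n).add_one_ne_zero
      rw [← h, norm_one] at hlt
      exact hlt.false
    have hpred := qPochTail_pred (mul_ne_zero ha hb) hab (m + n + 1)
    rw [add_sub_cancel_right] at hpred
    refine mul_left_cancel₀ hne ?_
    rw [mul_left_comm, truncatedTheta_succ_left ha hb hab, mul_left_comm, ih, hpred,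
      prod_range_succ]
    push_cast
    rw [add_right_comm (m : ℤ) 1]
    norm_cast
    ring

lemma truncatedTheta_eq (m n : ℕ) :
    truncatedTheta a b m n = qPochTail (a * b) (m + n) * qPochInf (a * b) (a * b) *
      ((∏ k ∈ range m, (1 + a * (a * b) ^ k)) * ∏ k ∈ range n, (1 + b * (a * b) ^ k)) := by
  have tail_zero : qPochTail (a * b) (0 : ℕ) = qPochInf (a * b) (a * b) := by simp [qPochTail]
  have tail_ne_zero : qPochTail (a * b) n ≠ 0 := by
    refine qPochInf_ne_zero hab ?_
    exact_mod_cast norm_pow_lt_one hab n.add_one_ne_zero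
  have hm := qPochTail_mul_truncatedTheta ha hb hab m n
  have hn := qPochTail_mul_truncatedTheta hb ha (mul_comm a b ▸ hab) n 0
  rw [truncatedTheta_comm, truncatedTheta_zero_zero hb ha, mul_comm b a, tail_zero, sq] at hn
  refine mul_left_cancel₀ (mul_ne_zero (qPochInf_ne_zero hab hab) tail_ne_zero) ?_
  push_cast at hn
  rw [add_zero] at hn
  linear_combination qPochInf (a * b) (a * b) * hm +
    qPochTail (a * b) (m + n) * (∏ k ∈ range m, (1 + a * (a * b) ^ k)) * hn

theorem ramTheta_eq_qPochInf :
    ramTheta a b = qPochInf (-a) (a * b) * qPochInf (-b) (a * b) * qPochInf (a * b) (a * b) := by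
  have hp := mul_ne_zero ha hb
  obtain ⟨C, hC⟩ := exists_norm_qPochTail_le hp hab
  have hC0 : 0 ≤ C := (norm_nonneg _).trans (hC 0)
  have tail_right (j : ℤ) : Tendsto (fun n : ℕ => qPochTail (a * b) (n + j)) atTop (𝓝 1) :=
    (tendsto_qPochTail hab).comp (tendsto_atTop_add_const_right _ j tendsto_natCast_atTop_atTop)
  have hlim : Tendsto (fun n : ℕ => truncatedTheta a b n n) atTop (𝓝 (ramTheta a b)) := by
    rw [ramTheta_eq_tsum_thetaTerm]
    refine tendsto_tsum_of_dominated_convergence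
      ((summable_thetaTerm ha hb hab).norm.mul_left (C * C)) (fun j => ?_)
      (.of_forall fun n j => ?_)
    · have hterm := ((tail_right (-j)).mul (tail_right j)).mul_const (thetaTerm a b j)
      simpa only [one_mul, ← sub_eq_add_neg] using hterm
    · rw [norm_mul, norm_mul]
      gcongr <;> apply hC
  have hlim' : Tendsto (fun n : ℕ => truncatedTheta a b n n) atTop
      (𝓝 (1 * qPochInf (a * b) (a * b) * (qPochInf (-a) (a * b) * qPochInf (-b) (a * b)))) := by
    have hprod (c : ℂ) := tendsto_prod_qPochInf hab (-c)
    simp only [neg_mul, sub_neg_eq_add] at hprod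
    have tail : Tendsto (fun n : ℕ => qPochTail (a * b) (n + n)) atTop (𝓝 1) :=
      (tendsto_qPochTail hab).comp
        (tendsto_natCast_atTop_atTop.atTop_add_atTop tendsto_natCast_atTop_atTop)
    simp only [truncatedTheta_eq ha hb hab]
    exact (tail.mul_const _).mul ((hprod a).mul (hprod b))
  rw [tendsto_nhds_unique hlim hlim']
  ring

end JacobiTripleProduct

section EulerProducts

/-- Euler's function `(q;q)_∞`, in which the theta quotients of the theorem are expressed. -/
noncomputable def eulerFun (q : ℂ) : ℂ := qPochInf q q

lemma ramTheta_ne_zero {a b : ℂ} (ha : a ≠ 0) (hb : b ≠ 0) (ha1 : ‖a‖ < 1) (hb1 : ‖b‖ < 1) :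
    ramTheta a b ≠ 0 := by
  have hab : ‖a * b‖ < 1 := by
    rw [norm_mul]
    exact mul_lt_one_of_nonneg_of_lt_one_left (norm_nonneg a) ha1 hb1.le
  rw [ramTheta_eq_qPochInf ha hb hab]
  exact mul_ne_zero (mul_ne_zero (qPochInf_ne_zero hab (norm_neg a ▸ ha1))
    (qPochInf_ne_zero hab (norm_neg b ▸ hb1))) (qPochInf_ne_zero hab hab)

variable {q : ℂ} (hq0 : q ≠ 0) (hq : ‖q‖ < 1)
include hq

lemma eulerFun_ne_zero : eulerFun q ≠ 0 := qPochInf_ne_zero hq hq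

lemma eulerFun_pow_ne_zero {n : ℕ} (hn : n ≠ 0) : eulerFun (q ^ n) ≠ 0 :=
  eulerFun_ne_zero (norm_pow_lt_one hq hn)

lemma eulerFun_eq_prod_range {n : ℕ} (hn : n ≠ 0) :
    eulerFun q = ∏ j ∈ range n, qPochInf (q ^ (j + 1)) (q ^ n) := by
  simpa only [eulerFun, ← pow_succ'] using qPochInf_eq_prod_range hq q hn

lemma qPochInf_neg_mul_eulerFun : qPochInf (-q) q * eulerFun q = eulerFun (q ^ 2) := by
  rw [eulerFun, mul_comm, qPochInf_mul_neg hq, eulerFun]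

lemma qPochInf_sq_mul_eulerFun : qPochInf q (q ^ 2) * eulerFun (q ^ 2) = eulerFun q := by
  rw [eulerFun_eq_prod_range hq two_ne_zero, eulerFun]
  simp [prod_range_succ]

include hq0

lemma psi_eq_qPochInf_mul_eulerFun : psi q = qPochInf (-q) (q ^ 2) * eulerFun (q ^ 4) := by
  have hq2 : ‖q ^ 2‖ < 1 := norm_pow_lt_one hq two_ne_zero
  have hq4 : ‖q * q ^ 3‖ < 1 := by rw [← pow_succ']; exact norm_pow_lt_one hq four_ne_zero
  rw [psi, ramTheta_eq_qPochInf hq0 (pow_ne_zero 3 hq0) hq4,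
    qPochInf_eq_prod_range hq2 (-q) two_ne_zero, eulerFun]
  simp only [prod_range_succ, range_zero, prod_empty]
  ring_nf

lemma psi_mul_eulerFun : psi q * eulerFun q = eulerFun (q ^ 2) ^ 2 := by
  have hq2 : ‖q ^ 2‖ < 1 := norm_pow_lt_one hq two_ne_zero
  have hsq := qPochInf_sq_mul_eulerFun hq2
  rw [← qPochInf_mul_neg hq2 q, ← pow_mul] at hsq
  rw [psi_eq_qPochInf_mul_eulerFun hq0 hq]
  linear_combination -qPochInf (-q) (q ^ 2) * eulerFun (q ^ 4) * qPochInf_sq_mul_eulerFun hq +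
    eulerFun (q ^ 2) * hsq

lemma psi_neg_mul_eulerFun : psi (-q) * eulerFun (q ^ 2) = eulerFun q * eulerFun (q ^ 4) := by
  rw [psi_eq_qPochInf_mul_eulerFun (neg_ne_zero.mpr hq0) (norm_neg q ▸ hq), neg_neg, neg_sq,
    Even.neg_pow (by decide), ← qPochInf_sq_mul_eulerFun hq]
  ring

lemma phi_neg_mul_eulerFun : phi (-q) * eulerFun (q ^ 2) = eulerFun q ^ 2 := by
  have hq2 : ‖-q * -q‖ < 1 := by rw [neg_mul_neg, ← sq]; exact norm_pow_lt_one hq two_ne_zero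
  rw [phi, ramTheta_eq_qPochInf (neg_ne_zero.mpr hq0) (neg_ne_zero.mpr hq0) hq2, neg_neg,
    neg_mul_neg, ← sq, ← eulerFun, ← qPochInf_sq_mul_eulerFun hq]
  ring_nf

lemma psi_ne_zero : psi q ≠ 0 :=
  ramTheta_ne_zero hq0 (pow_ne_zero 3 hq0) hq (norm_pow_lt_one hq three_ne_zero)

lemma ramTheta_one_left : ramTheta 1 q = 2 * psi q := by
  have hone := qPochInf_eq_one_sub_mul hq (-1)
  rw [neg_one_mul] at hone
  refine mul_right_cancel₀ (eulerFun_ne_zero hq) ?_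
  rw [mul_assoc, psi_mul_eulerFun hq0 hq, ← qPochInf_neg_mul_eulerFun hq,
    ramTheta_eq_qPochInf one_ne_zero hq0 (by rwa [one_mul]), one_mul, hone, eulerFun]
  ring

lemma ramTheta_one_four_mul_ramTheta_two_three :
    ramTheta q (q ^ 4) * ramTheta (q ^ 2) (q ^ 3) * (eulerFun q * eulerFun (q ^ 10)) =
      eulerFun (q ^ 2) * eulerFun (q ^ 5) ^ 3 := by
  have hq5 : ‖q ^ 5‖ < 1 := norm_pow_lt_one hq (by simp)
  have hdiss := qPochInf_eq_prod_range hq (-q) (N := 5) (by simp)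
  have hfive := qPochInf_neg_mul_eulerFun hq5
  rw [← pow_mul] at hfive
  rw [← hfive, ← qPochInf_neg_mul_eulerFun hq, hdiss,
    ramTheta_eq_qPochInf hq0 (pow_ne_zero 4 hq0) (by rwa [← pow_succ']),
    ramTheta_eq_qPochInf (pow_ne_zero 2 hq0) (pow_ne_zero 3 hq0) (by rwa [← pow_add]),
    eulerFun, eulerFun]
  simp only [prod_range_succ, range_zero, prod_empty]
  ring_nf

lemma ramTheta_neg_one_nine_mul_ramTheta_neg_three_seven :
    ramTheta (-q) (-q ^ 9) * ramTheta (-q ^ 3) (-q ^ 7) * (eulerFun (q ^ 5) * eulerFun (q ^ 2)) =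
      eulerFun q * eulerFun (q ^ 10) ^ 3 := by
  have hq2 : ‖q ^ 2‖ < 1 := norm_pow_lt_one hq two_ne_zero
  have hq5 : ‖q ^ 5‖ < 1 := norm_pow_lt_one hq (by simp)
  have hq10 : ‖q ^ 10‖ < 1 := norm_pow_lt_one hq (by simp)
  have hdiss := qPochInf_eq_prod_range hq2 q (N := 5) (by simp)
  have hfive := qPochInf_sq_mul_eulerFun hq5
  rw [← pow_mul] at hfive
  have hne (n : ℕ) : -q ^ n ≠ 0 := neg_ne_zero.mpr (pow_ne_zero n hq0)
  rw [← hfive, ← qPochInf_sq_mul_eulerFun hq, hdiss,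
    ramTheta_eq_qPochInf (neg_ne_zero.mpr hq0) (hne 9) (by rwa [neg_mul_neg, ← pow_succ']),
    ramTheta_eq_qPochInf (hne 3) (hne 7) (by rwa [neg_mul_neg, ← pow_add]),
    eulerFun, eulerFun]
  simp only [prod_range_succ, range_zero, prod_empty]
  ring_nf

end EulerProducts

lemma ramTheta_mul_ramTheta_eq_mul_psi {a b : ℂ} (ha : a ≠ 0) (hb : b ≠ 0) (hab : ‖a * b‖ < 1) :
    ramTheta a (a * b ^ 2) * ramTheta b (a ^ 2 * b) = ramTheta a b * psi (a * b) := by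
  have hq := mul_ne_zero ha hb
  have hq2 : ‖(a * b) ^ 2‖ < 1 := norm_pow_lt_one hab two_ne_zero
  have hleft : a * (a * b ^ 2) = (a * b) ^ 2 := by ring
  have hright : b * (a ^ 2 * b) = (a * b) ^ 2 := by ring
  refine mul_right_cancel₀ (eulerFun_ne_zero hab) ?_
  rw [mul_assoc (ramTheta a b), psi_mul_eulerFun hq hab, ramTheta_eq_qPochInf ha hb hab,
    ramTheta_eq_qPochInf ha (by positivity) (hleft ▸ hq2),
    ramTheta_eq_qPochInf hb (by positivity) (hright ▸ hq2), hleft, hright,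
    qPochInf_eq_prod_range hab (-a) two_ne_zero, qPochInf_eq_prod_range hab (-b) two_ne_zero,
    eulerFun, eulerFun]
  simp only [prod_range_succ, range_zero, prod_empty]
  ring_nf

section Quintic

/-- The quotient `Ω₁` on the complex unit disc; `Omega1` is its restriction to real arguments. -/
noncomputable def omega₁ (q : ℂ) : ℂ := ramTheta (q ^ 4) (q ^ 6) / ramTheta (-q) (-q ^ 9)

/-- The quotient `Ω₂` on the complex unit disc; `Omega2` is its restriction to real arguments. -/
noncomputable def omega₂ (q : ℂ) : ℂ := q * ramTheta (q ^ 2) (q ^ 8) / ramTheta (-q ^ 3) (-q ^ 7)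

variable {q : ℂ} (hq0 : q ≠ 0)
include hq0

lemma ramTheta_one_div_pow (m n : ℕ) :
    ramTheta (1 / q ^ m) (q ^ (2 * m + n)) = ramTheta (q ^ m) (q ^ n) / q ^ m := by
  have hm : q ^ m ≠ 0 := pow_ne_zero m hq0
  have hproduct : (1 / q ^ m) ^ 2 * q ^ (2 * m + n) = q ^ n := by
    rw [pow_add, mul_comm 2 m, pow_mul]
    field_simp
  rw [ramTheta_eq_mul_ramTheta_inv (one_div_ne_zero hm) (pow_ne_zero _ hq0), hproduct,
    one_div, inv_inv, ramTheta_comm]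
  field_simp

variable (hq : ‖q‖ < 1)
include hq

lemma ramTheta_one_left_sq :
    ramTheta 1 q ^ 2 =
      4 * (ramTheta q (q ^ 4) * ramTheta (q ^ 2) (q ^ 3)) + q * ramTheta 1 (q ^ 5) ^ 2 := by
  have schroeter : ramTheta 1 q ^ 2 =
      ramTheta q (q ^ 4) * (ramTheta (q ^ 3) (q ^ 2) + ramTheta (q ^ 2) (q ^ 3)) +
        q * ramTheta (q ^ 3) (q ^ 2) * ramTheta (1 / q) (q ^ 6) +
        q ^ 3 * ramTheta (q ^ 4) q * ramTheta (1 / q ^ 3) (q ^ 8) +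
        q ^ 6 * ramTheta (q ^ 5) 1 * ramTheta (1 / q ^ 5) (q ^ 10) := by
    have h := ramTheta_mul_ramTheta_eq_sum one_ne_zero hq0 one_ne_zero hq0 (by rwa [one_mul]) rfl 2
    simp only [Nat.reducePow, Nat.reduceAdd, sum_range_succ, sum_range_zero, thetaTerm,
      triangular] at h
    norm_num1 at h
    field_simp at h
    linear_combination h
  have hone := ramTheta_one_div_pow hq0 1 4
  have hthree := ramTheta_one_div_pow hq0 3 2
  have hfive := ramTheta_one_div_pow hq0 5 0
  simp only [pow_one, pow_zero] at hone hfive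
  rw [schroeter, hone, hthree, hfive, ramTheta_comm (q ^ 3), ramTheta_comm (q ^ 4),
    ramTheta_comm (q ^ 5)]
  field_simp
  ring

lemma psi_sq_sub_mul_psi_pow_five_sq :
    psi q ^ 2 - q * psi (q ^ 5) ^ 2 = ramTheta q (q ^ 4) * ramTheta (q ^ 2) (q ^ 3) := by
  have hsq := ramTheta_one_left_sq hq0 hq
  rw [ramTheta_one_left hq0 hq, ramTheta_one_left (pow_ne_zero 5 hq0)
    (norm_pow_lt_one hq (by simp))] at hsq
  linear_combination hsq / 4

lemma ramTheta_neg_one_four_mul_ramTheta_two_neg_three :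
    ramTheta (-q) (q ^ 4) * ramTheta (q ^ 2) (-q ^ 3) =
      ramTheta (q ^ 4) (q ^ 6) * ramTheta (-q ^ 3) (-q ^ 7) -
        q * ramTheta (q ^ 2) (q ^ 8) * ramTheta (-q) (-q ^ 9) := by
  have hq5 : ‖-q * q ^ 4‖ < 1 := by
    rw [neg_mul, norm_neg, ← pow_succ']
    exact norm_pow_lt_one hq (by simp)
  have h := ramTheta_mul_ramTheta_eq_sum (neg_ne_zero.mpr hq0) (pow_ne_zero 4 hq0)
    (pow_ne_zero 2 hq0) (neg_ne_zero.mpr (pow_ne_zero 3 hq0)) hq5 (by ring) 1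
  simp only [Nat.reducePow, Nat.reduceAdd, sum_range_succ, sum_range_zero, thetaTerm,
    triangular] at h
  norm_num1 at h
  field_simp at h
  rw [ramTheta_comm (q ^ 4), ramTheta_comm (q ^ 2) (q ^ 8)]
  linear_combination h

lemma ramTheta_four_six_mul_ramTheta_neg_one_nine :
    ramTheta (q ^ 4) (q ^ 6) * ramTheta (-q) (-q ^ 9) = ramTheta (-q) (q ^ 4) * psi (-q ^ 5) := by
  have hq5 : ‖-q ^ 5‖ < 1 := norm_neg (q ^ 5) ▸ norm_pow_lt_one hq (by simp)
  have hprod : -q * q ^ 4 = -q ^ 5 := by ring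
  rw [← hprod, ← ramTheta_mul_ramTheta_eq_mul_psi (neg_ne_zero.mpr hq0) (pow_ne_zero 4 hq0)
    (hprod ▸ hq5), mul_comm]
  ring_nf

lemma ramTheta_two_eight_mul_ramTheta_neg_three_seven :
    ramTheta (q ^ 2) (q ^ 8) * ramTheta (-q ^ 3) (-q ^ 7) =
      ramTheta (q ^ 2) (-q ^ 3) * psi (-q ^ 5) := by
  have hq5 : ‖-q ^ 5‖ < 1 := norm_neg (q ^ 5) ▸ norm_pow_lt_one hq (by simp)
  have hprod : q ^ 2 * -q ^ 3 = -q ^ 5 := by ring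
  rw [← hprod, ← ramTheta_mul_ramTheta_eq_mul_psi (pow_ne_zero 2 hq0)
    (neg_ne_zero.mpr (pow_ne_zero 3 hq0)) (hprod ▸ hq5)]
  ring_nf

lemma ramTheta_neg_pow_ne_zero {m n : ℕ} (hm : m ≠ 0) (hn : n ≠ 0) :
    ramTheta (-q ^ m) (-q ^ n) ≠ 0 :=
  ramTheta_ne_zero (neg_ne_zero.mpr (pow_ne_zero m hq0)) (neg_ne_zero.mpr (pow_ne_zero n hq0))
    (norm_neg (q ^ m) ▸ norm_pow_lt_one hq hm) (norm_neg (q ^ n) ▸ norm_pow_lt_one hq hn)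

lemma omega₁_sub_omega₂ :
    omega₁ q - omega₂ q = (psi (q ^ 2) ^ 2 - q ^ 2 * psi (q ^ 10) ^ 2) / psi (-q ^ 5) ^ 2 := by
  have hq2 : ‖q ^ 2‖ < 1 := norm_pow_lt_one hq two_ne_zero
  have hU : ramTheta (-q) (-q ^ 9) ≠ 0 := by
    simpa only [pow_one] using ramTheta_neg_pow_ne_zero hq0 hq one_ne_zero (n := 9) (by simp)
  have hV : ramTheta (-q ^ 3) (-q ^ 7) ≠ 0 :=
    ramTheta_neg_pow_ne_zero hq0 hq (by simp) (by simp)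
  have hpsi : psi (-q ^ 5) ≠ 0 :=
    psi_ne_zero (neg_ne_zero.mpr (pow_ne_zero 5 hq0))
      (norm_neg (q ^ 5) ▸ norm_pow_lt_one hq (by simp))
  have hquintic := psi_sq_sub_mul_psi_pow_five_sq (pow_ne_zero 2 hq0) hq2
  simp only [← pow_mul, Nat.reduceMul] at hquintic
  have hleft := ramTheta_four_six_mul_ramTheta_neg_one_nine hq0 hq
  have hright := ramTheta_two_eight_mul_ramTheta_neg_three_seven hq0 hq
  have hrotate := ramTheta_neg_one_four_mul_ramTheta_two_neg_three hq0 hq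
  rw [hquintic, omega₁, omega₂, div_sub_div _ _ hU hV,
    div_eq_div_iff (mul_ne_zero hU hV) (pow_ne_zero 2 hpsi)]
  linear_combination -psi (-q ^ 5) ^ 2 * hrotate -
    ramTheta (q ^ 2) (-q ^ 3) * psi (-q ^ 5) * hleft -
    ramTheta (q ^ 4) (q ^ 6) * ramTheta (-q) (-q ^ 9) * hright

lemma omega₁_mul_omega₂ :
    omega₁ q * omega₂ q = q * phi (-q ^ 10) * psi (-q) / (phi (-q) * psi (q ^ 5)) := by
  have hq2 : ‖q ^ 2‖ < 1 := norm_pow_lt_one hq two_ne_zero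
  have hq5 : ‖q ^ 5‖ < 1 := norm_pow_lt_one hq (by simp)
  have hq10 : ‖q ^ 10‖ < 1 := norm_pow_lt_one hq (by simp)
  have E₁ := eulerFun_ne_zero hq
  have E₂ := eulerFun_ne_zero hq2
  have E₄ := eulerFun_pow_ne_zero hq four_ne_zero
  have E₅ := eulerFun_ne_zero hq5
  have E₁₀ := eulerFun_ne_zero hq10
  have E₂₀ := eulerFun_pow_ne_zero hq (n := 20) (by simp)
  have hden := ramTheta_neg_one_nine_mul_ramTheta_neg_three_seven hq0 hq
  have hnum := ramTheta_one_four_mul_ramTheta_two_three (pow_ne_zero 2 hq0) hq2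
  have hphi₁₀ := phi_neg_mul_eulerFun (pow_ne_zero 10 hq0) hq10
  have hpsi₅ := psi_mul_eulerFun (pow_ne_zero 5 hq0) hq5
  simp only [← pow_mul, Nat.reduceMul] at hnum hphi₁₀ hpsi₅
  rw [omega₁, omega₂, div_mul_div_comm, mul_left_comm, mul_comm (ramTheta (q ^ 4) _),
    eq_div_of_mul_eq (mul_ne_zero E₂ E₂₀) hnum, eq_div_of_mul_eq (mul_ne_zero E₅ E₂) hden,
    eq_div_of_mul_eq E₂ (phi_neg_mul_eulerFun hq0 hq), eq_div_of_mul_eq E₂₀ hphi₁₀,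
    eq_div_of_mul_eq E₂ (psi_neg_mul_eulerFun hq0 hq), eq_div_of_mul_eq E₅ hpsi₅]
  field_simp

end Quintic

theorem stmt12_general (q : ℂ) (hq : ‖q‖ < 1) :
    omega₁ q ^ 2 + omega₂ q ^ 2 =
      psi (q ^ 2) ^ 4 / psi (-q ^ 5) ^ 4 + q ^ 4 * psi (q ^ 10) ^ 4 / psi (-q ^ 5) ^ 4 -
        2 * q ^ 2 * psi (q ^ 2) ^ 2 * psi (q ^ 10) ^ 2 / psi (-q ^ 5) ^ 4 +
        2 * q * phi (-q ^ 10) * psi (-q) / (phi (-q) * psi (q ^ 5)) := by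
  rcases eq_or_ne q 0 with rfl | hq0
  · simp [omega₁, omega₂, psi, ramTheta_zero_zero]
  · calc omega₁ q ^ 2 + omega₂ q ^ 2
      _ = (omega₁ q - omega₂ q) ^ 2 + 2 * (omega₁ q * omega₂ q) := by ring
      _ = _ := by
        rw [omega₁_sub_omega₂ hq0 hq, omega₁_mul_omega₂ hq0 hq]
        ring

theorem stmt12 (q : ℝ) (hq0 : 0 < q) (hq1 : q < 1) :
    Omega1 q ^ 2 + Omega2 q ^ 2
      = psi ((q : ℂ) ^ 2) ^ 4 / psi (-(q : ℂ) ^ 5) ^ 4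
        + (q : ℂ) ^ 4 * psi ((q : ℂ) ^ 10) ^ 4 / psi (-(q : ℂ) ^ 5) ^ 4
        - 2 * (q : ℂ) ^ 2 * psi ((q : ℂ) ^ 2) ^ 2 * psi ((q : ℂ) ^ 10) ^ 2
            / psi (-(q : ℂ) ^ 5) ^ 4
        + 2 * (q : ℂ) * phi (-(q : ℂ) ^ 10) * psi (-(q : ℂ))
            / (phi (-(q : ℂ)) * psi ((q : ℂ) ^ 5)) := by
  exact stmt12_general q (by rwa [Complex.norm_real, Real.norm_of_nonneg hq0.le])
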